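/- arXiv:2511.15436 — 2 statements merged into one kernel-verified Lean document; each statement's English description precedes it below -/
import Mathlib

section
/- The set of μ-integrable functions (f ∈ M with ∫_X |f| dμ < ∞) is dense in M_F if and only if every A ∈ 𝒜_> can be written as a union of finitely many μ-atoms. -/
open MeasureTheory Topology Set Pointwise

/-- The set of all real-valued measurable functions on `X`, as a subtype. -/
abbrev Mble (X : Type*) [MeasurableSpace X] : Type _ := {f : X → ℝ // Measurable f}

/-- The basic set `B(f, A, ε)`: all `g` such that for some measurable null set `N`,
`sup_{x ∈ A \ N} |f x - g x| < ε`. -/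
def FBall {X : Type*} [MeasurableSpace X] (μ : Measure X) (f : Mble X) (A : Set X)
    (ε : ℝ) : Set (Mble X) :=
  {g | ∃ N : Set X, MeasurableSet N ∧ μ N = 0 ∧
        ∃ b : ℝ, b < ε ∧ ∀ x ∈ A \ N, |f.1 x - g.1 x| ≤ b}

/-- The `F_μ`-topology on `Mble X`, generated by the sets `B(f, A, ε)` with
`A` measurable of finite measure and `ε > 0`. -/
def FTop {X : Type*} [MeasurableSpace X] (μ : Measure X) : TopologicalSpace (Mble X) :=
  TopologicalSpace.generateFrom
    {S | ∃ (f : Mble X) (A : Set X) (ε : ℝ),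
        MeasurableSet A ∧ μ A < ⊤ ∧ 0 < ε ∧ S = FBall μ f A ε}

/-- A `μ`-atom: a measurable set of positive measure admitting no decomposition into two
disjoint measurable pieces of positive measure. -/
def MuAtom {X : Type*} [MeasurableSpace X] (μ : Measure X) (A : Set X) : Prop :=
  MeasurableSet A ∧ 0 < μ A ∧
    ¬ ∃ B C : Set X, MeasurableSet B ∧ MeasurableSet C ∧ Disjoint B C ∧
        B ∪ C = A ∧ 0 < μ B ∧ 0 < μ C

/-- `G` is a union of finitely many `μ`-atoms. -/
def FinAtomUnion {X : Type*} [MeasurableSpace X] (μ : Measure X) (G : Set X) : Prop :=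
  ∃ (n : ℕ) (F : Fin n → Set X), (∀ i, MuAtom μ (F i)) ∧ G = ⋃ i, F i

/-- `L^∞_G`: the measurable functions that are essentially bounded on `G`. -/
def Linf {X : Type*} [MeasurableSpace X] (μ : Measure X) (G : Set X) : Set (Mble X) :=
  {f | ∃ M₀ : ℝ, 0 < M₀ ∧ ∃ N : Set X, MeasurableSet N ∧ μ N = 0 ∧
        ∀ x ∈ G \ N, |f.1 x| ≤ M₀}

/-- The intersection `⋂_{G ∈ 𝒜_>} L^∞_G`. -/
def InterLinf {X : Type*} [MeasurableSpace X] (μ : Measure X) : Set (Mble X) :=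
  ⋂ G ∈ {A : Set X | MeasurableSet A ∧ 0 < μ A ∧ μ A < ⊤}, Linf μ G

/-- The zero function as an element of `Mble X`. -/
def zeroM {X : Type*} [MeasurableSpace X] : Mble X := ⟨fun _ => 0, measurable_const⟩

/-- `μ` is hemifinite: some sequence in `𝒜_>` almost contains every member of `𝒜_>`. -/
def Hemifinite {X : Type*} [MeasurableSpace X] (μ : Measure X) : Prop :=
  ∃ A : ℕ → Set X, (∀ n, MeasurableSet (A n) ∧ 0 < μ (A n) ∧ μ (A n) < ⊤) ∧
    ∀ F : Set X, MeasurableSet F → 0 < μ F → μ F < ⊤ → ∃ n, μ (F \ A n) = 0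

/-- `G⁺`: functions strictly positive μ-almost everywhere on `G`. -/
def Gplus {X : Type*} [MeasurableSpace X] (μ : Measure X) (G : Set X) : Set (Mble X) :=
  {f | ∃ N : Set X, MeasurableSet N ∧ μ N = 0 ∧ ∀ x ∈ G \ N, 0 < f.1 x}

/-- `G⁰`: functions nonnegative μ-almost everywhere on `G`. -/
def Gzero {X : Type*} [MeasurableSpace X] (μ : Measure X) (G : Set X) : Set (Mble X) :=
  {f | ∃ N : Set X, MeasurableSet N ∧ μ N = 0 ∧ ∀ x ∈ G \ N, 0 ≤ f.1 x}

instance {X : Type*} [MeasurableSpace X] : Add (Mble X) :=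
  ⟨fun f g => ⟨f.1 + g.1, f.2.add g.2⟩⟩

/-!
Both sides are equivalent to: every measurable `f : X → ℝ` is integrable on every measurable set
`A` of finite measure. On the topological side, a basic neighbourhood of `f` only sees `f` on a set
`A` of finite measure: it contains `A.indicator f`, while each of its members differs from `f` by a
bounded function on `A`. On the measure-theoretic side, measurable functions are essentially bounded
on atoms. A set `A` of positive measure that is not a finite union of atoms splits into two pieces
of positive measure, one of which is again not a finite union of atoms; iterating yields disjoint
`D n ⊆ A` of positive measure, and the function equal to `(μ (D n))⁻¹` on `D n` is not integrable
on `A`.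
-/

section Topology

variable {X : Type*} [MeasurableSpace X] {μ : Measure X} {f g : Mble X} {A : Set X} {ε : ℝ}

lemma isOpen_fBall (hA : MeasurableSet A) (hAfin : μ A < ⊤) (hε : 0 < ε) :
    IsOpen[FTop μ] (FBall μ f A ε) :=
  TopologicalSpace.isOpen_generateFrom_of_mem ⟨f, A, ε, hA, hAfin, hε, rfl⟩

lemma self_mem_fBall (hε : 0 < ε) : f ∈ FBall μ f A ε :=
  ⟨∅, MeasurableSet.empty, measure_empty, 0, hε, by simp⟩

lemma fBall_mem_of_eqOn {f₀ : Mble X} (hf : f ∈ FBall μ f₀ A ε) (hgf : EqOn g.1 f.1 A) :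
    g ∈ FBall μ f₀ A ε := by
  obtain ⟨N, hN, hμN, b, hb, hle⟩ := hf
  exact ⟨N, hN, hμN, b, hb, fun x hx => hgf hx.1 ▸ hle x hx⟩

lemma exists_forall_eqOn_mem_of_isOpen_fTop {U : Set (Mble X)} (hU : IsOpen[FTop μ] U)
    (hf : f ∈ U) :
    ∃ A, MeasurableSet A ∧ μ A < ⊤ ∧ ∀ g : Mble X, EqOn g.1 f.1 A → g ∈ U := by
  induction hU with
  | basic U hU =>
    obtain ⟨f₀, A, ε, hA, hAfin, -, rfl⟩ := hU
    exact ⟨A, hA, hAfin, fun g => fBall_mem_of_eqOn hf⟩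
  | univ => exact ⟨∅, MeasurableSet.empty, by simp, fun _ _ => mem_univ _⟩
  | inter U V _ _ ihU ihV =>
    obtain ⟨A, hA, hAfin, hAU⟩ := ihU hf.1
    obtain ⟨B, hB, hBfin, hBV⟩ := ihV hf.2
    exact ⟨A ∪ B, hA.union hB, measure_union_lt_top hAfin hBfin, fun g hg =>
      ⟨hAU g (hg.mono subset_union_left), hBV g (hg.mono subset_union_right)⟩⟩
  | sUnion 𝒰 _ ih =>
    obtain ⟨U, hU, hfU⟩ := hf
    obtain ⟨A, hA, hAfin, hAU⟩ := ih U hU hfU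
    exact ⟨A, hA, hAfin, fun g hg => ⟨U, hU, hAU g hg⟩⟩

lemma integrableOn_of_mem_fBall (hA : MeasurableSet A) (hAfin : μ A ≠ ⊤)
    (hg : g ∈ FBall μ f A ε) (hgA : IntegrableOn g.1 A μ) : IntegrableOn f.1 A μ := by
  obtain ⟨N, -, hμN, b, -, hle⟩ := hg
  have hbound : ∀ᵐ x ∂μ.restrict A, ‖f.1 x - g.1 x‖ ≤ b := by
    rw [ae_restrict_iff' hA]
    filter_upwards [measure_eq_zero_iff_ae_notMem.1 hμN] with x hxN hxA
    exact hle x ⟨hxA, hxN⟩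
  have hsub : IntegrableOn (f.1 - g.1) A μ :=
    Measure.integrableOn_of_bounded hAfin (f.2.sub g.2).aestronglyMeasurable hbound
  simpa only [sub_add_cancel] using hsub.add hgA

theorem dense_fTop_hasFiniteIntegral_iff :
    @Dense (Mble X) (FTop μ) {f | HasFiniteIntegral f.1 μ} ↔
      ∀ A, MeasurableSet A → μ A < ⊤ → ∀ f : X → ℝ, Measurable f → IntegrableOn f A μ := by
  rw [@dense_iff_inter_open _ (FTop μ)]
  constructor
  · intro hdense A hA hAfin f hf
    obtain ⟨g, hgf, hg⟩ := hdense (FBall μ ⟨f, hf⟩ A 1) (isOpen_fBall hA hAfin one_pos)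
      ⟨_, self_mem_fBall one_pos⟩
    have hgint : Integrable g.1 μ := ⟨g.2.aestronglyMeasurable, hg⟩
    exact integrableOn_of_mem_fBall hA hAfin.ne hgf hgint.integrableOn
  · rintro hint U hU ⟨f, hfU⟩
    obtain ⟨A, hA, hAfin, hAU⟩ := exists_forall_eqOn_mem_of_isOpen_fTop hU hfU
    have hindicator : Integrable (A.indicator f.1) μ :=
      (integrable_indicator_iff hA).2 (hint A hA hAfin f.1 f.2)
    exact ⟨⟨A.indicator f.1, f.2.indicator hA⟩, hAU _ eqOn_indicator, hindicator.2⟩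

end Topology

section Atoms

variable {X : Type*} [MeasurableSpace X] {μ : Measure X} {A B : Set X}

lemma MuAtom.measure_sdiff_eq_zero (hA : MuAtom μ A) {s : Set X} (hs : MeasurableSet s)
    (hAs : μ (A ∩ s) ≠ 0) : μ (A \ s) = 0 := by
  by_contra hdiff
  exact hA.2.2 ⟨A ∩ s, A \ s, hA.1.inter hs, hA.1.diff hs, disjoint_sdiff_inter.symm,
    inter_union_sdiff A s, pos_iff_ne_zero.2 hAs, pos_iff_ne_zero.2 hdiff⟩

lemma MuAtom.exists_ae_norm_le {E : Type*} [SeminormedAddCommGroup E] (hA : MuAtom μ A)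
    {f : X → E} (hf : StronglyMeasurable f) : ∃ C : ℝ, ∀ᵐ x ∂μ.restrict A, ‖f x‖ ≤ C := by
  have hmeas (n : ℕ) : MeasurableSet {x | ‖f x‖ ≤ n} :=
    measurableSet_le hf.norm.measurable measurable_const
  have hcover : ⋃ n : ℕ, A ∩ {x | ‖f x‖ ≤ n} = A := by
    rw [← inter_iUnion, inter_eq_left]
    exact fun x _ => mem_iUnion.2 (exists_nat_ge ‖f x‖)
  obtain ⟨n, hn⟩ : ∃ n : ℕ, 0 < μ (A ∩ {x | ‖f x‖ ≤ n}) :=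
    exists_measure_pos_of_not_measure_iUnion_null (hcover.symm ▸ hA.2.1.ne')
  refine ⟨n, (ae_restrict_iff' hA.1).2 ?_⟩
  filter_upwards [measure_eq_zero_iff_ae_notMem.1 (hA.measure_sdiff_eq_zero (hmeas n) hn.ne')]
    with x hx hxA
  exact not_not.1 fun hxn => hx ⟨hxA, hxn⟩

lemma FinAtomUnion.integrableOn {E : Type*} [NormedAddCommGroup E] (hA : FinAtomUnion μ A)
    (hAfin : μ A ≠ ⊤) {f : X → E} (hf : StronglyMeasurable f) : IntegrableOn f A μ := by
  obtain ⟨n, F, hF, rfl⟩ := hA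
  refine integrableOn_finite_iUnion.2 fun i => ?_
  obtain ⟨C, hC⟩ := (hF i).exists_ae_norm_le hf
  exact Measure.integrableOn_of_bounded (measure_ne_top_of_subset (subset_iUnion F i) hAfin)
    hf.aestronglyMeasurable hC

lemma MuAtom.finAtomUnion (hA : MuAtom μ A) : FinAtomUnion μ A :=
  ⟨1, fun _ => A, fun _ => hA, (iUnion_const A).symm⟩

lemma FinAtomUnion.union (hA : FinAtomUnion μ A) (hB : FinAtomUnion μ B) :
    FinAtomUnion μ (A ∪ B) := by
  obtain ⟨m, F, hF, rfl⟩ := hA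
  obtain ⟨n, G, hG, rfl⟩ := hB
  refine ⟨m + n, Fin.append F G, Fin.addCases (by simpa using hF) (by simpa using hG), ?_⟩
  simp [← finSumFinEquiv.surjective.iUnion_comp, iUnion_sum]

end Atoms

section NotFinAtomUnion

variable {X : Type*} [MeasurableSpace X] {μ : Measure X} {A : Set X}

lemma exists_subset_not_finAtomUnion (hA : MeasurableSet A) (hApos : 0 < μ A)
    (hnot : ¬ FinAtomUnion μ A) :
    ∃ B ⊆ A, (MeasurableSet B ∧ 0 < μ B ∧ ¬ FinAtomUnion μ B) ∧ 0 < μ (A \ B) := by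
  obtain ⟨B, C, hB, hC, hdisj, rfl, hBpos, hCpos⟩ :
      ∃ B C, MeasurableSet B ∧ MeasurableSet C ∧ Disjoint B C ∧ B ∪ C = A ∧ 0 < μ B ∧ 0 < μ C :=
    not_not.1 fun hsplit => hnot (MuAtom.finAtomUnion ⟨hA, hApos, hsplit⟩)
  by_cases hBunion : FinAtomUnion μ B
  · refine ⟨C, subset_union_right, ⟨hC, hCpos, fun hCunion => hnot (hBunion.union hCunion)⟩, ?_⟩
    rwa [union_sdiff_right, hdisj.sdiff_eq_left]
  · refine ⟨B, subset_union_left, ⟨hB, hBpos, hBunion⟩, ?_⟩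
    rwa [union_sdiff_left, hdisj.symm.sdiff_eq_left]

lemma exists_antitone_measure_sdiff_pos_of_not_finAtomUnion (hA : MeasurableSet A)
    (hApos : 0 < μ A) (hnot : ¬ FinAtomUnion μ A) :
    ∃ S : ℕ → Set X, S 0 = A ∧ Antitone S ∧ (∀ n, MeasurableSet (S n)) ∧
      ∀ n, 0 < μ (S n \ S (n + 1)) := by
  let T := {B : Set X // MeasurableSet B ∧ 0 < μ B ∧ ¬ FinAtomUnion μ B}
  have hstep (B : T) : ∃ C : T, C.1 ⊆ B.1 ∧ 0 < μ (B.1 \ C.1) := by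
    obtain ⟨C, hCB, hC, hdiff⟩ := exists_subset_not_finAtomUnion B.2.1 B.2.2.1 B.2.2.2
    exact ⟨⟨C, hC⟩, hCB, hdiff⟩
  choose shrink hsubset hdiff using hstep
  let S (n : ℕ) : T := shrink^[n] ⟨A, hA, hApos, hnot⟩
  have hsucc (n : ℕ) : S (n + 1) = shrink (S n) := Function.iterate_succ_apply' shrink n _
  refine ⟨fun n => (S n).1, rfl, antitone_nat_of_succ_le fun n => ?_, fun n => (S n).2.1,
    fun n => ?_⟩
  · simpa only [hsucc] using hsubset (S n)
  · simpa only [hsucc] using hdiff (S n)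

lemma pairwise_disjoint_sdiff_succ_of_antitone {α : Type*} {S : ℕ → Set α} (hS : Antitone S) :
    Pairwise (Function.onFun Disjoint fun n => S n \ S (n + 1)) :=
  (pairwise_disjoint_on _).2 fun _ _ hmn =>
    disjoint_left.2 fun _ hm hn => hm.2 (hS (Nat.succ_le_of_lt hmn) hn.1)

lemma exists_pairwise_disjoint_of_not_finAtomUnion (hA : MeasurableSet A) (hApos : 0 < μ A)
    (hnot : ¬ FinAtomUnion μ A) :
    ∃ D : ℕ → Set X, (∀ n, MeasurableSet (D n)) ∧ (∀ n, D n ⊆ A) ∧ (∀ n, 0 < μ (D n)) ∧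
      Pairwise (Function.onFun Disjoint D) := by
  obtain ⟨S, rfl, hanti, hmeas, hpos⟩ :=
    exists_antitone_measure_sdiff_pos_of_not_finAtomUnion hA hApos hnot
  exact ⟨fun n => S n \ S (n + 1), fun n => (hmeas n).diff (hmeas (n + 1)),
    fun n => sdiff_subset.trans (hanti n.zero_le), hpos,
    pairwise_disjoint_sdiff_succ_of_antitone hanti⟩

lemma exists_measurable_not_integrableOn_iUnion {ι : Type*} [Countable ι] [Infinite ι]
    {D : ι → Set X} (hD : ∀ i, MeasurableSet (D i)) (hdisj : Pairwise (Function.onFun Disjoint D))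
    (hpos : ∀ i, μ (D i) ≠ 0) (hfin : ∀ i, μ (D i) ≠ ⊤) :
    ∃ f : X → ℝ, Measurable f ∧ ¬ IntegrableOn f (⋃ i, D i) μ := by
  obtain ⟨f, hf, hfD⟩ := exists_measurable_piecewise D hD (fun i _ => (μ.real (D i))⁻¹)
    (fun _ => measurable_const)
    (hdisj.mono fun i j hij => by simp only [hij.inter_eq, eqOn_empty])
  refine ⟨f, hf, fun hint => ?_⟩
  have hone (i : ι) : ∫ x in D i, f x ∂μ = 1 := by
    rw [setIntegral_congr_fun (hD i) (hfD i), setIntegral_const, smul_eq_mul]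
    exact mul_inv_cancel₀ (ENNReal.toReal_ne_zero.2 ⟨hpos i, hfin i⟩)
  have hsummable := (hasSum_integral_iUnion hD hdisj hint).summable
  simp only [hone, summable_const_iff, one_ne_zero] at hsummable

end NotFinAtomUnion

theorem finAtomUnion_iff_forall_integrableOn {X : Type*} [MeasurableSpace X] {μ : Measure X}
    {A : Set X} (hA : MeasurableSet A) (hApos : 0 < μ A) (hAfin : μ A ≠ ⊤) :
    FinAtomUnion μ A ↔ ∀ f : X → ℝ, Measurable f → IntegrableOn f A μ := by
  refine ⟨fun hunion f hf => hunion.integrableOn hAfin hf.stronglyMeasurable, fun hint => ?_⟩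
  by_contra hnot
  obtain ⟨D, hD, hDA, hDpos, hdisj⟩ := exists_pairwise_disjoint_of_not_finAtomUnion hA hApos hnot
  obtain ⟨f, hf, hfnot⟩ := exists_measurable_not_integrableOn_iUnion hD hdisj
    (fun n => (hDpos n).ne') (fun n => measure_ne_top_of_subset (hDA n) hAfin)
  exact hfnot ((hint f hf).mono_set (iUnion_subset hDA))

theorem stmt9_general {X : Type*} [MeasurableSpace X] (μ : Measure X) :
    @Dense (Mble X) (FTop μ) {f : Mble X | HasFiniteIntegral f.1 μ} ↔
      ∀ A : Set X, MeasurableSet A → 0 < μ A → μ A < ⊤ → FinAtomUnion μ A := by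
  rw [dense_fTop_hasFiniteIntegral_iff]
  constructor
  · intro hint A hA hApos hAfin
    exact (finAtomUnion_iff_forall_integrableOn hA hApos hAfin.ne).2 (hint A hA hAfin)
  · intro hunion A hA hAfin
    rcases eq_zero_or_pos (μ A) with hAnull | hApos
    · exact fun f _ => IntegrableOn.of_measure_zero hAnull
    · exact (finAtomUnion_iff_forall_integrableOn hA hApos hAfin.ne).1 (hunion A hA hApos hAfin)

/-- the `μ`-integrable functions are dense in `M_F` iff every `A ∈ 𝒜_>`
is a finite union of `μ`-atoms. -/
theorem stmt9 {X : Type*} [MeasurableSpace X] (μ : Measure X)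
    (hpos : 0 < μ Set.univ)
    (hsub : ∀ A : Set X, MeasurableSet A → μ A = ⊤ →
      ∃ B, B ⊆ A ∧ MeasurableSet B ∧ 0 < μ B ∧ μ B < ⊤) :
    @Dense (Mble X) (FTop μ) {f : Mble X | HasFiniteIntegral f.1 μ} ↔
      ∀ A : Set X, MeasurableSet A → 0 < μ A → μ A < ⊤ → FinAtomUnion μ A := by
  exact stmt9_general μ
end

section
/- For every f ∈ M let [f] = {g ∈ M : g(x) = f(x) for μ-almost every x ∈ X}. Then [f] is a G_δ subset of M_F for every f ∈ M if and only if μ is σ-finite. -/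
/-!
Write `[f]` for the a.e.-equivalence class of `f`. If `X` is covered by sets `A n` of finite
measure, then `[f]` is the countable intersection of the balls `B(f, A n, 1 / (k + 1))`.
Conversely, an open set containing `f` contains every function that agrees with `f` on a certain set
of finite measure, so a `G_δ` set containing `f` contains every function that agrees with `f` on a
certain countable union `S` of such sets. If `[f]` is `G_δ`, then `f + 1_{Sᶜ}` must lie in `[f]`;
this forces `μ Sᶜ = 0`, and adding this null set to the pieces of `S` covers `X`.
-/

open MeasureTheory Topology Set Pointwise

section

variable {X : Type*} [MeasurableSpace X]

/-- The class `[f]` of measurable functions agreeing with `f` almost everywhere, as a subset of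
`Mble X` rather than an element of a quotient. -/
def aeClass (μ : Measure X) (f : Mble X) : Set (Mble X) := {g | ∀ᵐ x ∂μ, g.1 x = f.1 x}

variable {μ : Measure X}

theorem mem_aeClass {f g : Mble X} : g ∈ aeClass μ f ↔ ∀ᵐ x ∂μ, g.1 x = f.1 x := Iff.rfl

theorem mem_FBall_iff {f g : Mble X} {A : Set X} {ε : ℝ} :
    g ∈ FBall μ f A ε ↔ ∃ b < ε, ∀ᵐ x ∂μ, x ∈ A → |f.1 x - g.1 x| ≤ b := by
  constructor
  · rintro ⟨N, -, hN, b, hb, hle⟩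
    exact ⟨b, hb, (measure_eq_zero_iff_ae_notMem.1 hN).mono fun x hxN hxA => hle x ⟨hxA, hxN⟩⟩
  · rintro ⟨b, hb, hle⟩
    obtain ⟨N, hsub, hN, hN0⟩ := exists_measurable_superset_of_null (ae_iff.1 hle)
    exact ⟨N, hN, hN0, b, hb, fun x hx => not_imp_comm.1 (@hsub x) hx.2 hx.1⟩

theorem mem_FBall_congr {f g h : Mble X} {A : Set X} {ε : ℝ} (hgh : EqOn g.1 h.1 A) :
    g ∈ FBall μ f A ε ↔ h ∈ FBall μ f A ε := by
  have hdist (b : ℝ) (x : X) : (x ∈ A → |f.1 x - g.1 x| ≤ b) ↔ (x ∈ A → |f.1 x - h.1 x| ≤ b) :=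
    forall_congr' fun hx => by rw [hgh hx]
  simp only [mem_FBall_iff, hdist]

theorem isOpen_FBall (f : Mble X) {A : Set X} (hA : MeasurableSet A) (hμA : μ A < ⊤) {ε : ℝ}
    (hε : 0 < ε) : IsOpen[FTop μ] (FBall μ f A ε) :=
  TopologicalSpace.isOpen_generateFrom_of_mem ⟨f, A, ε, hA, hμA, hε, rfl⟩

theorem aeClass_restrict_eq_iInter_FBall (f : Mble X) {A : Set X} (hA : MeasurableSet A) :
    aeClass (μ.restrict A) f = ⋂ k : ℕ, FBall μ f A (1 / ((k : ℝ) + 1)) := by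
  ext g
  simp only [mem_aeClass, ae_restrict_iff' hA, mem_iInter, mem_FBall_iff]
  constructor
  · intro hg k
    refine ⟨0, Nat.one_div_pos_of_nat, hg.mono fun x hx hxA => ?_⟩
    simp [hx hxA]
  · intro hg
    choose b hb hle using hg
    filter_upwards [ae_all_iff.2 hle] with x hx hxA
    by_contra hne
    obtain ⟨k, hk⟩ := exists_nat_one_div_lt (abs_sub_pos.2 (Ne.symm hne))
    exact ((hx k hxA).trans_lt ((hb k).trans hk)).false

theorem aeClass_eq_iInter_restrict {ι : Type*} [Countable ι] {A : ι → Set X}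
    (hA : ⋃ i, A i = univ) (f : Mble X) : aeClass μ f = ⋂ i, aeClass (μ.restrict (A i)) f := by
  ext g
  simp only [mem_aeClass, mem_iInter]
  rw [← ae_restrict_iUnion_iff, hA, Measure.restrict_univ]

theorem isGδ_aeClass_restrict (f : Mble X) {A : Set X} (hA : MeasurableSet A) (hμA : μ A < ⊤) :
    @IsGδ _ (FTop μ) (aeClass (μ.restrict A) f) := by
  let _ := FTop μ
  rw [aeClass_restrict_eq_iInter_FBall f hA]
  exact IsGδ.iInter_of_isOpen fun _ => isOpen_FBall f hA hμA Nat.one_div_pos_of_nat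

theorem isGδ_aeClass [SigmaFinite μ] (f : Mble X) : @IsGδ _ (FTop μ) (aeClass μ f) := by
  let _ := FTop μ
  rw [aeClass_eq_iInter_restrict (iUnion_spanningSets μ)]
  exact IsGδ.iInter fun n =>
    isGδ_aeClass_restrict f (measurableSet_spanningSets μ n) (measure_spanningSets_lt_top μ n)

theorem exists_forall_eqOn_mem_of_isOpen {U : Set (Mble X)} (hU : IsOpen[FTop μ] U) {f : Mble X}
    (hf : f ∈ U) :
    ∃ A, MeasurableSet A ∧ μ A < ⊤ ∧ ∀ g : Mble X, EqOn g.1 f.1 A → g ∈ U := by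
  change TopologicalSpace.GenerateOpen _ U at hU
  induction hU with
  | basic _ hs =>
    obtain ⟨_, A, _, hA, hμA, -, rfl⟩ := hs
    exact ⟨A, hA, hμA, fun g hg => (mem_FBall_congr hg).2 hf⟩
  | univ => exact ⟨∅, .empty, by simp, fun _ _ => mem_univ _⟩
  | inter s t _ _ ihs iht =>
    obtain ⟨A, hA, hμA, hAs⟩ := ihs hf.1
    obtain ⟨B, hB, hμB, hBt⟩ := iht hf.2
    exact ⟨A ∪ B, hA.union hB, measure_union_lt_top hμA hμB, fun g hg =>
      ⟨hAs g (hg.mono subset_union_left), hBt g (hg.mono subset_union_right)⟩⟩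
  | sUnion S _ ih =>
    obtain ⟨s, hs, hfs⟩ := hf
    obtain ⟨A, hA, hμA, hAs⟩ := ih s hs hfs
    exact ⟨A, hA, hμA, fun g hg => ⟨s, hs, hAs g hg⟩⟩

theorem exists_forall_eqOn_iUnion_mem_of_isGδ {S : Set (Mble X)} (hS : @IsGδ _ (FTop μ) S)
    {f : Mble X} (hf : f ∈ S) :
    ∃ A : ℕ → Set X, (∀ n, MeasurableSet (A n)) ∧ (∀ n, μ (A n) < ⊤) ∧
      ∀ g : Mble X, EqOn g.1 f.1 (⋃ n, A n) → g ∈ S := by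
  let _ := FTop μ
  obtain ⟨U, hU, rfl⟩ := isGδ_iff_eq_iInter_nat.1 hS
  choose A hA hμA hAU using fun n => exists_forall_eqOn_mem_of_isOpen (hU n) (mem_iInter.1 hf n)
  exact ⟨A, hA, hμA, fun g hg => mem_iInter.2 fun n => hAU n g (hg.mono (subset_iUnion A n))⟩

theorem measure_compl_eq_zero_of_forall_eqOn_mem_aeClass {f : Mble X} {A : Set X}
    (hA : MeasurableSet A) (h : ∀ g : Mble X, EqOn g.1 f.1 A → g ∈ aeClass μ f) : μ Aᶜ = 0 := by
  let g : Mble X := ⟨f.1 + Aᶜ.indicator 1, f.2.add (measurable_one.indicator hA.compl)⟩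
  have hg_iff (x : X) : g.1 x = f.1 x ↔ x ∉ Aᶜ := by simp [g]
  have hg : g ∈ aeClass μ f := h g fun x hx => (hg_iff x).2 (notMem_compl_iff.2 hx)
  exact measure_eq_zero_iff_ae_notMem.2 ((mem_aeClass.1 hg).mono fun x => (hg_iff x).1)

theorem sigmaFinite_of_measure_compl_iUnion_eq_zero {A : ℕ → Set X} (hμA : ∀ n, μ (A n) < ⊤)
    (hnull : μ (⋃ n, A n)ᶜ = 0) : SigmaFinite μ :=
  ⟨⟨{ set := fun n => A n ∪ (⋃ n, A n)ᶜ
      set_mem := fun _ => trivial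
      finite := fun n => measure_union_lt_top (hμA n) (hnull.trans_lt ENNReal.zero_lt_top)
      spanning := by rw [← iUnion_union, union_compl_self] }⟩⟩

theorem sigmaFinite_of_isGδ_aeClass {f : Mble X} (hf : @IsGδ _ (FTop μ) (aeClass μ f)) :
    SigmaFinite μ := by
  have hf_mem : f ∈ aeClass μ f := mem_aeClass.2 (ae_of_all μ fun _ => rfl)
  obtain ⟨A, hA, hμA, hAf⟩ := exists_forall_eqOn_iUnion_mem_of_isGδ hf hf_mem
  exact sigmaFinite_of_measure_compl_iUnion_eq_zero hμA
    (measure_compl_eq_zero_of_forall_eqOn_mem_aeClass (.iUnion hA) hAf)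

theorem sigmaFinite_iff_exists_measurable_iUnion_eq_univ :
    SigmaFinite μ ↔
      ∃ A : ℕ → Set X, (∀ n, MeasurableSet (A n) ∧ μ (A n) < ⊤) ∧ (⋃ n, A n) = univ := by
  constructor
  · intro _
    exact ⟨spanningSets μ,
      fun n => ⟨measurableSet_spanningSets μ n, measure_spanningSets_lt_top μ n⟩,
      iUnion_spanningSets μ⟩
  · rintro ⟨A, hA, hcover⟩
    exact ⟨⟨⟨A, fun _ => trivial, fun n => (hA n).2, hcover⟩⟩⟩

end

theorem stmt17_general {X : Type*} [MeasurableSpace X] (μ : Measure X) (f : Mble X) :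
    @IsGδ (Mble X) (FTop μ) {g : Mble X | ∀ᵐ x ∂μ, g.1 x = f.1 x} ↔ SigmaFinite μ :=
  ⟨sigmaFinite_of_isGδ_aeClass, fun _ => isGδ_aeClass f⟩

/-- every a.e.-equivalence class `[f]` is a `G_δ` subset of `M_F` iff
`μ` is `σ`-finite. -/
theorem stmt17 {X : Type*} [MeasurableSpace X] (μ : Measure X)
    (hpos : 0 < μ Set.univ)
    (hsub : ∀ A : Set X, MeasurableSet A → μ A = ⊤ →
      ∃ B, B ⊆ A ∧ MeasurableSet B ∧ 0 < μ B ∧ μ B < ⊤) :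
    (∀ f : Mble X, @IsGδ (Mble X) (FTop μ) {g : Mble X | ∀ᵐ x ∂μ, g.1 x = f.1 x}) ↔
      ∃ A : ℕ → Set X, (∀ n, MeasurableSet (A n) ∧ μ (A n) < ⊤) ∧
        (⋃ n, A n) = Set.univ := by
  have : Nonempty (Mble X) := ⟨zeroM⟩
  rw [forall_congr' (stmt17_general μ), forall_const,
    sigmaFinite_iff_exists_measurable_iUnion_eq_univ]
end
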